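/- arXiv:2502.08989 — 6 statements merged into one kernel-verified Lean document; each statement's English description precedes it below -/
import Mathlib

section
/- Correctness of the aggregation protocol with arbitrary participant sets (dropout tolerance): let q be a prime, n ≥ 1 with (n : ZMod q) ≠ 0, and d ≥ 1. Let I be a finite set of participating users, let x : I → (Fin d → ZMod q) assign to each user its local model vector, and let k : I → ZMod n → (Fin d → ZMod q) assign to each user an independent family of mask vectors. Define the masked share of user i for receiver j componentwise by c i j = (fun a => (x i a) · (n : ZMod q)⁻¹ + k i j a − k i (j − 1) a). Then the aggregator's output, obtained by summing the partial aggregates of all receivers, equals the sum of the participants' models: ∑_{j ∈ ZMod n} ∑_{i ∈ I} c i j = ∑_{i ∈ I} x i (as functions Fin d → ZMod q). -/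
section MaskedShares

variable {J R M ι : Type*} [AddCommGroup M]

/-- The share of the model `x` sent to receiver `j`: the `w`-fraction of `x`, masked by `k`.
The cyclic predecessor `j - 1` on `ZMod n` is replaced by `σ j` for a permutation `σ` of the
receivers, and the weight `w` stands for the inverse of the number of receivers. -/
def maskedShare [SMul R M] (σ : Equiv.Perm J) (w : R) (x : M) (k : J → M) (j : J) : M :=
  w • x + k j - k (σ j)

variable [Fintype J]

theorem sum_sub_comp_perm_eq_zero (σ : Equiv.Perm J) (k : J → M) :
    ∑ j, (k j - k (σ j)) = 0 := by
  rw [Finset.sum_sub_distrib, Equiv.sum_comp σ k, sub_self]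

variable [Semiring R] [Module R M]

theorem sum_maskedShare (σ : Equiv.Perm J) {w : R} (hw : (Fintype.card J : R) * w = 1)
    (x : M) (k : J → M) : ∑ j, maskedShare σ w x k j = x :=
  calc ∑ j, maskedShare σ w x k j
      = ∑ _j : J, w • x + ∑ j, (k j - k (σ j)) := by
        simp only [maskedShare, add_sub_assoc, Finset.sum_add_distrib]
    _ = ((Fintype.card J : R) * w) • x := by
        rw [sum_sub_comp_perm_eq_zero, add_zero, Finset.sum_const, Finset.card_univ, mul_smul,
          Nat.cast_smul_eq_nsmul]
    _ = x := by rw [hw, one_smul]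

theorem aggregation_correctness_general (σ : Equiv.Perm J) {w : R}
    (hw : (Fintype.card J : R) * w = 1) (I : Finset ι) (x : ι → M) (k : ι → J → M) :
    ∑ j, ∑ i ∈ I, maskedShare σ w (x i) (k i) j = ∑ i ∈ I, x i := by
  rw [Finset.sum_comm]
  exact Finset.sum_congr rfl fun i _ => sum_maskedShare σ hw (x i) (k i)

end MaskedShares

/-- Correctness of aggregation with an arbitrary finite participant set `I`
(dropout tolerance): summing all receivers' partial aggregates of the masked
shares recovers the sum of the participants' model vectors. -/
theorem aggregation_correctness (q n d : ℕ) [Fact (Nat.Prime q)] [NeZero n]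
    (hd : 1 ≤ d) (hn : (n : ZMod q) ≠ 0)
    (I : Type) [Fintype I]
    (x : I → Fin d → ZMod q)
    (k : I → ZMod n → Fin d → ZMod q) :
    (∑ j : ZMod n, ∑ i : I,
        (fun a : Fin d => x i a * (n : ZMod q)⁻¹ + k i j a - k i (j - 1) a))
      = ∑ i : I, x i := by
  have hw : (Fintype.card (ZMod n) : ZMod q) * (n : ZMod q)⁻¹ = 1 := by
    rw [ZMod.card, mul_inv_cancel₀ hn]
  simp only [mul_comm (x _ _)]
  exact aggregation_correctness_general (Equiv.subRight 1) hw Finset.univ x k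
end

section
/- Privacy for two honest users: let q be a positive integer and let a, b, a', b' ∈ ZMod q satisfy a + b = a' + b'. Then the pushforward of the uniform distribution on ZMod q under r ↦ (a + r, b − r) equals the pushforward of the uniform distribution on ZMod q under r ↦ (a' + r, b' − r). That is, the joint distribution of the two oppositely masked values depends only on the sum a + b. -/
theorem pmf_map_equiv_apply {α β : Type*} (e : α ≃ β) (p : PMF α) (y : β) :
    PMF.map e p y = p (e.symm y) := by
  classical
  rw [PMF.map_apply, ← e.symm.tsum_eq]
  simp only [Equiv.apply_symm_apply, tsum_ite_eq']

theorem pmf_map_equiv_uniformOfFintype {α β : Type*} [Fintype α] [Nonempty α]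
    [Fintype β] [Nonempty β] (e : α ≃ β) :
    PMF.map e (PMF.uniformOfFintype α) = PMF.uniformOfFintype β := by
  ext y
  simp only [pmf_map_equiv_apply, PMF.uniformOfFintype_apply, Fintype.card_congr e]

section MaskedPair

variable {G : Type*} [AddCommGroup G] [Fintype G]

theorem pmf_map_add_sub_uniformOfFintype (a b : G) :
    PMF.map (fun r : G => (a + r, b - r)) (PMF.uniformOfFintype G)
      = PMF.map (fun s : G => (s, a + b - s)) (PMF.uniformOfFintype G) := by
  have factor_through_translation :
      (fun r : G => (a + r, b - r)) = (fun s => (s, a + b - s)) ∘ Equiv.addLeft a := by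
    ext r
    · rfl
    · exact (add_sub_add_left_eq_sub b r a).symm
  rw [factor_through_translation, ← PMF.map_comp, pmf_map_equiv_uniformOfFintype]

theorem two_honest_users_privacy_general {a b a' b' : G} (h : a + b = a' + b') :
    PMF.map (fun r : G => (a + r, b - r)) (PMF.uniformOfFintype G)
      = PMF.map (fun r : G => (a' + r, b' - r)) (PMF.uniformOfFintype G) := by
  rw [pmf_map_add_sub_uniformOfFintype a b, pmf_map_add_sub_uniformOfFintype a' b', h]

end MaskedPair

/-- Privacy for two honest users: if `a + b = a' + b'` in `ZMod q`, then the
joint distribution of `(a + r, b - r)` for uniformly random `r : ZMod q`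
equals that of `(a' + r, b' - r)`; it depends only on the sum `a + b`. -/
theorem two_honest_users_privacy (q : ℕ) [NeZero q]
    (a b a' b' : ZMod q) (h : a + b = a' + b') :
    PMF.map (fun r : ZMod q => (a + r, b - r)) (PMF.uniformOfFintype (ZMod q))
      = PMF.map (fun r : ZMod q => (a' + r, b' - r))
          (PMF.uniformOfFintype (ZMod q)) :=
  two_honest_users_privacy_general h
end

section
/- Uniformity of the key-negation mask tuple: let q be a positive integer and n ≥ 1. The pushforward of the uniform distribution on the key families (ZMod n → ZMod q) under the map k ↦ (fun j => k j − k (j − 1)), viewed as taking values in the subtype {v : ZMod n → ZMod q // ∑_{j} v j = 0}, is the uniform distribution on that subtype. -/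
/-!
A homomorphism has equally large fibres over its range, so it maps the uniform distribution to the
uniform distribution on its range. It remains to see that the cyclic difference reaches every
zero-sum family. Its range contains `Pi.single j a - Pi.single (j + 1) a` for all `j`, hence,
telescoping along the cycle, `Pi.single i a - Pi.single j a` for all `i` and `j`; and a
zero-sum family `v` is `∑ i, (Pi.single i (v i) - Pi.single i₀ (v i))` for any fixed `i₀`.
-/

/-- The range of the cyclic difference map consists of zero-sum families. -/
theorem cyclic_difference_zero_sum (q n : ℕ) [NeZero q] [NeZero n]
    (k : ZMod n → ZMod q) :
    ∑ j : ZMod n, (k j - k (j - 1)) = 0 := by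
  rw [Finset.sum_sub_distrib, sub_eq_zero]
  exact (Fintype.sum_equiv (Equiv.subRight (1 : ZMod n))
    (fun j => k (j - 1)) k (fun j => rfl)).symm

instance zeroSumFamilies_nonempty (q n : ℕ) [NeZero q] [NeZero n] :
    Nonempty {v : ZMod n → ZMod q // ∑ j : ZMod n, v j = 0} :=
  ⟨⟨0, by simp⟩⟩

section UniformPMF

theorem pmf_eq_uniformOfFintype_of_forall_eq {β : Type*} [Fintype β] [Nonempty β] (p : PMF β)
    (hp : ∀ b b', p b = p b') : p = PMF.uniformOfFintype β := by
  ext b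
  have card_mul_eq_one : (Fintype.card β : ENNReal) * p b = 1 := by
    simpa [tsum_fintype, fun b' => hp b' b] using p.tsum_coe
  rw [PMF.uniformOfFintype_apply]
  exact ENNReal.eq_inv_of_mul_eq_one_left (by rwa [mul_comm])

variable {α β : Type*} [Fintype α] [Nonempty α]

theorem map_uniformOfFintype_apply [DecidableEq β] (f : α → β) (b : β) :
    (PMF.uniformOfFintype α).map f b =
      Finset.card {a | f a = b} * (Fintype.card α : ENNReal)⁻¹ := by
  simp [PMF.map_apply, tsum_fintype, Finset.sum_ite, eq_comm]

theorem map_uniformOfFintype_eq_of_card_fiber_eq [Fintype β] [Nonempty β] [DecidableEq β]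
    (f : α → β) (hf : ∀ b b', Finset.card {a | f a = b} = Finset.card {a | f a = b'}) :
    (PMF.uniformOfFintype α).map f = PMF.uniformOfFintype β :=
  pmf_eq_uniformOfFintype_of_forall_eq _ fun b b' => by
    rw [map_uniformOfFintype_apply, map_uniformOfFintype_apply, hf b b']

theorem map_codRestrict_uniformOfFintype {G H : Type*} [AddGroup G] [Fintype G] [AddMonoid H]
    (f : G →+ H) {p : H → Prop} [Fintype {y // p y}] [Nonempty {y // p y}]
    (hf : ∀ y, y ∈ Set.range f ↔ p y) :
    (PMF.uniformOfFintype G).map (fun x => (⟨f x, (hf _).1 ⟨x, rfl⟩⟩ : {y // p y})) =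
      PMF.uniformOfFintype {y // p y} := by
  classical
  refine map_uniformOfFintype_eq_of_card_fiber_eq _ fun y y' => ?_
  simpa only [Subtype.ext_iff] using
    AddMonoidHom.card_fiber_eq_of_mem_range f ((hf y).2 y.2) ((hf y').2 y'.2)

end UniformPMF

section PermDifference

variable {ι A : Type*} [AddCommGroup A] (σ : Equiv.Perm ι)

/-- The difference map `k ↦ k - k ∘ σ` along a permutation `σ` of the index set; the cyclic
difference map `D` is the case `σ = (· - 1)` on `ZMod n`. -/
def permDifference : (ι → A) →+ (ι → A) where
  toFun k j := k j - k (σ j)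
  map_zero' := by ext; simp
  map_add' k l := by ext; simp [add_sub_add_comm]

theorem permDifference_apply (k : ι → A) (j : ι) : permDifference σ k j = k j - k (σ j) := rfl

theorem sum_permDifference [Fintype ι] (k : ι → A) : ∑ j, permDifference σ k j = 0 := by
  simp [permDifference_apply, Equiv.sum_comp σ k]

theorem permDifference_single [DecidableEq ι] (i : ι) (a : A) :
    permDifference σ (Pi.single i a) = Pi.single i a - Pi.single (σ.symm i) a := by
  ext j
  simp [permDifference_apply, Pi.single_apply, σ.eq_symm_apply]

variable {σ}

theorem single_sub_single_mem_range_permDifference [DecidableEq ι] {i j : ι}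
    (h : σ.SameCycle i j) (a : A) :
    Pi.single i a - Pi.single j a ∈ (permDifference (A := A) σ).range := by
  have pow_mem (m : ℕ) (i : ι) :
      Pi.single ((σ ^ m) i) a - Pi.single i a ∈ (permDifference (A := A) σ).range := by
    induction m with
    | zero => simp
    | succ m ih =>
      rw [pow_succ', Equiv.Perm.mul_apply, ← sub_add_sub_cancel _ (Pi.single ((σ ^ m) i) a)]
      exact add_mem ⟨_, by simpa using permDifference_single σ (σ ((σ ^ m) i)) a⟩ ih
  obtain ⟨m, rfl⟩ := h
  obtain ⟨m, rfl | rfl⟩ := m.eq_nat_or_neg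
  · simpa using neg_mem (pow_mem m i)
  · simpa using pow_mem m ((σ ^ (-m : ℤ)) i)

theorem mem_range_permDifference_iff_sum_eq_zero [Fintype ι] (hσ : ∀ i j, σ.SameCycle i j)
    (v : ι → A) : v ∈ (permDifference σ).range ↔ ∑ j, v j = 0 := by
  classical
  refine ⟨fun ⟨k, hk⟩ => hk ▸ sum_permDifference σ k, fun hv => ?_⟩
  cases isEmpty_or_nonempty ι with
  | inl _ => exact Subsingleton.elim 0 v ▸ zero_mem _
  | inr h =>
    obtain ⟨i₀⟩ := h
    have sum_single_eq_zero : ∑ i, Pi.single (M := fun _ => A) i₀ (v i) = 0 := by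
      simpa [hv] using (map_sum (AddMonoidHom.single (fun _ : ι => A) i₀) v Finset.univ).symm
    have decomposition : ∑ i, (Pi.single i (v i) - Pi.single i₀ (v i)) = v := by
      rw [Finset.sum_sub_distrib, Finset.univ_sum_single, sum_single_eq_zero, sub_zero]
    rw [← decomposition]
    exact sum_mem fun i _ => single_sub_single_mem_range_permDifference (hσ i i₀) (v i)

end PermDifference

theorem sameCycle_subRight_iff {G : Type*} [AddGroup G] {g i j : G} :
    Equiv.Perm.SameCycle (Equiv.subRight g) i j ↔ -j + i ∈ AddSubgroup.zmultiples g := by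
  have subRight_eq_addRight : Equiv.subRight g = Equiv.addRight (-g) := by
    ext; simp [sub_eq_add_neg]
  simp [Equiv.Perm.SameCycle, subRight_eq_addRight, AddSubgroup.mem_zmultiples_iff,
    ← sub_eq_add_neg, sub_eq_iff_eq_add, eq_neg_add_iff_add_eq, eq_comm (a := i)]

theorem sameCycle_subRight_one {n : ℕ} (i j : ZMod n) :
    Equiv.Perm.SameCycle (Equiv.subRight (1 : ZMod n)) i j := by
  obtain ⟨m, hm⟩ := ZMod.intCast_surjective (-j + i)
  exact sameCycle_subRight_iff.2 ⟨m, by simpa using hm⟩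

instance nonempty_sum_eq_zero {ι A : Type*} [Fintype ι] [AddCommMonoid A] :
    Nonempty {v : ι → A // ∑ j, v j = 0} :=
  ⟨⟨0, by simp⟩⟩

theorem key_negation_mask_uniform_general {ι A : Type*} [Fintype ι] [DecidableEq ι]
    [AddCommGroup A] [Fintype A] [DecidableEq A] (σ : Equiv.Perm ι)
    (hσ : ∀ i j, σ.SameCycle i j) :
    PMF.map (fun k : ι → A =>
        (⟨permDifference σ k, sum_permDifference σ k⟩ : {v : ι → A // ∑ j, v j = 0}))
      (PMF.uniformOfFintype (ι → A))
    = PMF.uniformOfFintype {v : ι → A // ∑ j, v j = 0} :=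
  map_codRestrict_uniformOfFintype (permDifference σ) (p := fun v : ι → A => ∑ j, v j = 0)
    (mem_range_permDifference_iff_sum_eq_zero hσ)

/-- Uniformity of the key-negation mask tuple: the pushforward of the uniform
distribution on key families `ZMod n → ZMod q` under
`k ↦ (fun j => k j - k (j - 1))`, viewed in the subtype of zero-sum families,
is the uniform distribution on that subtype. -/
theorem key_negation_mask_uniform (q n : ℕ) [NeZero q] [NeZero n] :
    PMF.map (fun k : ZMod n → ZMod q =>
        (⟨fun j : ZMod n => k j - k (j - 1), cyclic_difference_zero_sum q n k⟩ :
          {v : ZMod n → ZMod q // ∑ j : ZMod n, v j = 0}))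
      (PMF.uniformOfFintype (ZMod n → ZMod q))
    = PMF.uniformOfFintype {v : ZMod n → ZMod q // ∑ j : ZMod n, v j = 0} :=
  key_negation_mask_uniform_general (Equiv.subRight 1) sameCycle_subRight_one
end

section
/- Proper-subset fiber counting (collusion resistance of the mask structure): let q be a positive integer, n ≥ 1, and let S be a subset of ZMod n with S ≠ ZMod n (i.e., at least one receiver is missing from S). Then for every target family v : ZMod n → ZMod q, the number of key families k : ZMod n → ZMod q satisfying k j − k (j − 1) = v j for all j ∈ S is exactly q^(n − |S|). In particular this count does not depend on v, so the restriction of the difference map to the coordinates in S maps the uniform distribution on key families to the uniform distribution on (all of) the S-indexed tuples. -/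
/-!
Reconstruct `k` from its mask differences by walking backwards along the predecessor map until the
walk leaves `S`: the differences on `S` together with the values of `k` off `S` determine `k`. On
finite types the two sides have the same cardinality, so `k ↦ (differences on S, values off S)` is a
bijection. The fibres of its first component are therefore copies of the set of families on `Sᶜ`,
and a map whose fibres all have the same size preserves uniformity. In `ZMod n`, walking backwards
visits every index, so it leaves any proper subset.
-/

theorem map_uniformOfFintype_of_card_fiber_eq {α β : Type*} [Fintype α] [Nonempty α] [Fintype β]
    [Nonempty β] [DecidableEq β] {f : α → β} {c : ℕ}
    (hf : ∀ b, Fintype.card {a // f a = b} = c) :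
    PMF.map f (PMF.uniformOfFintype α) = PMF.uniformOfFintype β := by
  have hcard : Fintype.card α = c * Fintype.card β := by
    rw [← Fintype.card_congr (Equiv.sigmaFiberEquiv f), Fintype.card_sigma]
    simp [hf, mul_comm]
  have hc : (c : ENNReal) ≠ 0 := by
    have : c ≠ 0 := left_ne_zero_of_mul (hcard ▸ Fintype.card_ne_zero)
    exact_mod_cast this
  ext b
  let _ : Fintype (f ⁻¹' {b}) := inferInstanceAs (Fintype {a // f a = b})
  have hfiber : Fintype.card (f ⁻¹' {b}) = c := hf b
  calc PMF.map f (PMF.uniformOfFintype α) b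
      = (PMF.uniformOfFintype α).toOuterMeasure (f ⁻¹' {b}) := by
        rw [← PMF.toOuterMeasure_apply_singleton, PMF.toOuterMeasure_map_apply]
    _ = (c * 1 : ENNReal) / (c * Fintype.card β) := by
        rw [PMF.toOuterMeasure_uniformOfFintype_apply, hfiber, hcard, Nat.cast_mul, mul_one]
    _ = PMF.uniformOfFintype β b := by
        rw [ENNReal.mul_div_mul_left _ _ hc (ENNReal.natCast_ne_top c), one_div,
          PMF.uniformOfFintype_apply]

section MaskDiff

variable {ι G : Type*} [AddGroup G] {p : ι → ι} {S : Finset ι}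

/-- The mask differences of the key family `k` seen by the receivers in `S`, where `p j` is the
predecessor of `j`. The protocol's ring of receivers is `p j = j - 1` on `ZMod n`. -/
def maskDiff (p : ι → ι) (S : Finset ι) (k : ι → G) : S → G :=
  fun j => k j - k (p j)

theorem maskDiff_eq_restrict_iff {k v : ι → G} :
    maskDiff p S k = S.restrict v ↔ ∀ j ∈ S, k j - k (p j) = v j := by
  simp [funext_iff, maskDiff]

theorem eq_of_maskDiff_eq_of_eqOn_compl (hS : ∀ i, ∃ m, p^[m] i ∉ S) {k k' : ι → G}
    (hdiff : maskDiff p S k = maskDiff p S k') (hcompl : ∀ i ∉ S, k i = k' i) : k = k' := by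
  funext i
  obtain ⟨m, hm⟩ := hS i
  induction m generalizing i with
  | zero => exact hcompl i hm
  | succ m ih =>
    have hpred : k (p i) = k' (p i) := ih (p i) hm
    by_cases hi : i ∈ S
    · have hdiff_i : k i - k (p i) = k' i - k' (p i) := congrFun hdiff ⟨i, hi⟩
      rwa [hpred, sub_left_inj] at hdiff_i
    · exact hcompl i hi

variable [Fintype ι] [DecidableEq ι]

theorem bijective_maskDiff_prod_restrict_compl [Finite G] (hS : ∀ i, ∃ m, p^[m] i ∉ S) :
    Function.Bijective fun k : ι → G => (maskDiff p S k, Sᶜ.restrict k) := by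
  rw [Nat.bijective_iff_injective_and_card]
  constructor
  · intro k k' h
    obtain ⟨hdiff, hcompl⟩ := Prod.mk.inj h
    exact eq_of_maskDiff_eq_of_eqOn_compl hS hdiff fun i hi =>
      congrFun hcompl ⟨i, Finset.mem_compl.mpr hi⟩
  · simp only [Nat.card_prod, Nat.card_fun, Nat.card_eq_fintype_card, Fintype.card_coe, ← pow_add,
      Finset.card_add_card_compl]

theorem card_maskDiff_fiber [Fintype G] [DecidableEq G] (hS : ∀ i, ∃ m, p^[m] i ∉ S) (w : S → G) :
    Fintype.card {k : ι → G // maskDiff p S k = w}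
      = Fintype.card G ^ (Fintype.card ι - S.card) := by
  let e := Equiv.ofBijective _ (bijective_maskDiff_prod_restrict_compl (G := G) hS)
  have fiberEquiv : {k : ι → G // maskDiff p S k = w} ≃ {u : S → G // u = w} × (↥Sᶜ → G) :=
    (e.subtypeEquiv fun _ => Iff.rfl).trans (Equiv.prodSubtypeFstEquivSubtypeProd (p := (· = w)))
  rw [Fintype.card_congr fiberEquiv, Fintype.card_prod, Fintype.card_subtype_eq, one_mul,
    Fintype.card_fun, Fintype.card_coe, Finset.card_compl]

theorem proper_subset_fiber_card_general [Fintype G] [DecidableEq G]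
    (hS : ∀ i, ∃ m, p^[m] i ∉ S) (v : ι → G) :
    Fintype.card {k : ι → G // ∀ j ∈ S, k j - k (p j) = v j}
        = Fintype.card G ^ (Fintype.card ι - S.card) ∧
    PMF.map (fun (k : ι → G) (j : S) => k j - k (p j)) (PMF.uniformOfFintype (ι → G))
      = PMF.uniformOfFintype (S → G) := by
  refine ⟨?_, map_uniformOfFintype_of_card_fiber_eq (card_maskDiff_fiber hS)⟩
  simp_rw [← maskDiff_eq_restrict_iff]
  exact card_maskDiff_fiber hS (S.restrict v)

end MaskDiff

theorem exists_iterate_sub_one_notMem {n : ℕ} [NeZero n] {S : Finset (ZMod n)}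
    (hS : S ≠ Finset.univ) (i : ZMod n) : ∃ m, (fun j => j - 1)^[m] i ∉ S := by
  obtain ⟨a, ha⟩ : ∃ a, a ∉ S := by simpa [Finset.eq_univ_iff_forall] using hS
  refine ⟨(i - a).val, ?_⟩
  have hiter : (fun j : ZMod n => j - 1)^[(i - a).val] i = a := by
    simp [sub_eq_add_neg _ (1 : ZMod n)]
  rwa [hiter]

/-- Proper-subset fiber counting (collusion resistance of the mask structure):
for `S` a proper subset of the receivers `ZMod n` and any target family `v`,
exactly `q ^ (n - |S|)` key families `k` satisfy `k j - k (j - 1) = v j` for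
all `j ∈ S`. In particular the count is independent of `v`, so the restriction
of the difference map to the coordinates in `S` pushes the uniform
distribution on key families to the uniform distribution on `S`-tuples. -/
theorem proper_subset_fiber_card (q n : ℕ) [NeZero q] [NeZero n]
    (S : Finset (ZMod n)) (hS : S ≠ Finset.univ) (v : ZMod n → ZMod q) :
    Fintype.card {k : ZMod n → ZMod q // ∀ j ∈ S, k j - k (j - 1) = v j}
        = q ^ (n - S.card) ∧
    PMF.map (fun (k : ZMod n → ZMod q) (j : S) => k j.val - k (j.val - 1))
        (PMF.uniformOfFintype (ZMod n → ZMod q))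
      = PMF.uniformOfFintype (S → ZMod q) := by
  simpa only [ZMod.card] using
    proper_subset_fiber_card_general (exists_iterate_sub_one_notMem hS) v
end

section
/- View of any proper subset of receivers is independent of the secret: let q be a prime, n ≥ 1 with (n : ZMod q) ≠ 0, and let S be a subset of ZMod n with S ≠ ZMod n. For any two local models x, x' ∈ ZMod q, the pushforward of the uniform distribution on key families (ZMod n → ZMod q) under the map k ↦ (fun j : S => x · (n : ZMod q)⁻¹ + k j − k (j − 1)) equals the pushforward under k ↦ (fun j : S => x' · (n : ZMod q)⁻¹ + k j − k (j − 1)). That is, the joint distribution of the masked shares received by the receivers in S is identical for all values of the user's local model. -/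
/-!
The masks `k j - k (j - 1)` telescope to zero around the full cycle, and this is the only
constraint on them: once one receiver `m` is left out, the equations `k j - k (j - 1) = c j` for
`j ≠ m` are solved by the partial sums of `c` starting after `m`. Hence the masks seen by a proper
subset of receivers are the image of a uniform key under a surjective homomorphism, so they are
jointly uniform, and adding any fixed shares leaves them uniform.
-/

theorem eq_uniformOfFintype_of_forall_eq {α : Type*} [Fintype α] [Nonempty α] {p : PMF α}
    (hp : ∀ a b, p a = p b) : p = PMF.uniformOfFintype α := by
  ext a
  have total_mass : p a * Fintype.card α = 1 := by
    calc p a * Fintype.card α = ∑ b, p b := by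
          rw [Fintype.sum_congr p (fun _ => p a) fun b => hp b a, Finset.sum_const,
            Finset.card_univ, nsmul_eq_mul, mul_comm]
      _ = 1 := by rw [← tsum_fintype (L := .unconditional α), p.tsum_coe]
  rw [PMF.uniformOfFintype_apply, ENNReal.eq_inv_of_mul_eq_one_left total_mass]

theorem map_const_add_uniformOfFintype_of_surjective {A B : Type*} [AddGroup A] [AddGroup B]
    [Fintype A] [Fintype B] {f : A →+ B} (hf : Function.Surjective f) (c : B) :
    PMF.map (fun a => c + f a) (PMF.uniformOfFintype A) = PMF.uniformOfFintype B := by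
  classical
  let p := PMF.map (fun a => c + f a) (PMF.uniformOfFintype A)
  have mass_eq (b : B) : p b = p c := by
    obtain ⟨a₀, ha₀⟩ := hf (-c + b)
    have fiber_iff (a : A) : b = c + f (a₀ + a) ↔ c = c + f a := by
      rw [map_add, ha₀, ← add_assoc, add_neg_cancel_left, left_eq_add, left_eq_add]
    simp only [p, PMF.map_apply, PMF.uniformOfFintype_apply]
    rw [← (Equiv.addLeft a₀).tsum_eq]
    simp only [Equiv.coe_addLeft, fiber_iff]
  exact eq_uniformOfFintype_of_forall_eq fun a b => (mass_eq a).trans (mass_eq b).symm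

theorem zmod_val_sub_one_add_one {n : ℕ} [NeZero n] {a : ZMod n} (ha : a ≠ 0) :
    (a - 1).val + 1 = a.val := by
  have one_le_val : 1 ≤ a.val := ZMod.val_pos.mpr ha
  have one_val : (1 : ZMod n).val = 1 := by
    rw [ZMod.val_one_eq_one_mod, Nat.mod_eq_of_lt (Nat.lt_of_le_of_lt one_le_val a.val_lt)]
  rw [ZMod.val_sub (one_val.trans_le one_le_val), one_val, Nat.sub_add_cancel one_le_val]

theorem exists_sub_pred_eq {n : ℕ} [NeZero n] {G : Type*} [AddCommGroup G]
    (m : ZMod n) (c : ZMod n → G) : ∃ k : ZMod n → G, ∀ j ≠ m, k j - k (j - 1) = c j := by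
  let partialSum (l : ℕ) : G := ∑ i ∈ Finset.range l, c (m + (i + 1 : ℕ))
  refine ⟨fun j => partialSum (j - m).val, fun j hj => ?_⟩
  have val_pred : (j - 1 - m).val + 1 = (j - m).val := by
    rw [sub_right_comm, zmod_val_sub_one_add_one (sub_ne_zero.mpr hj)]
  calc partialSum (j - m).val - partialSum (j - 1 - m).val
      = c (m + ((j - 1 - m).val + 1 : ℕ)) := by
        rw [← val_pred]
        exact sub_eq_of_eq_add' (Finset.sum_range_succ _ _)
    _ = c j := by rw [val_pred, ZMod.natCast_zmod_val, add_sub_cancel]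

/-- The joint mask of the receivers in `S`, as a homomorphism from key families: receiver `j`
gets `k j - k (j - 1)`, with indices read cyclically. -/
def jointMask {n : ℕ} (G : Type*) [AddCommGroup G] (S : Finset (ZMod n)) :
    (ZMod n → G) →+ (S → G) :=
  AddMonoidHom.mk' (fun k j => k j - k (j - 1)) fun k l => by
    ext j
    exact add_sub_add_comm (k j) (l j) (k (j - 1)) (l (j - 1))

theorem jointMask_surjective {n : ℕ} [NeZero n] {G : Type*} [AddCommGroup G]
    {S : Finset (ZMod n)} (hS : S ≠ Finset.univ) : Function.Surjective (jointMask G S) := by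
  obtain ⟨m, hm⟩ : ∃ m, m ∉ S := not_forall.mp (mt Finset.eq_univ_iff_forall.mpr hS)
  intro c
  obtain ⟨k, hk⟩ := exists_sub_pred_eq m (Function.extend Subtype.val c 0)
  refine ⟨k, funext fun j => ?_⟩
  calc k j - k (j - 1) = Function.extend Subtype.val c 0 j.val := hk j (ne_of_mem_of_not_mem j.2 hm)
    _ = c j := Subtype.val_injective.extend_apply c 0 j

theorem proper_subset_view_independent_general {n : ℕ} [NeZero n] {G : Type*} [AddCommGroup G]
    [Fintype G] {S : Finset (ZMod n)} (hS : S ≠ Finset.univ) (c : S → G) :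
    PMF.map (fun (k : ZMod n → G) (j : S) => c j + k j.val - k (j.val - 1))
      (PMF.uniformOfFintype (ZMod n → G)) = PMF.uniformOfFintype (S → G) := by
  simp only [add_sub_assoc]
  exact map_const_add_uniformOfFintype_of_surjective (jointMask_surjective hS) c

/-- The view of any proper subset `S` of receivers is independent of the
secret: for `q` prime, `n ≥ 1` with `(n : ZMod q) ≠ 0`, and any two local
models `x, x'`, the joint distribution of the masked shares
`(x * (n : ZMod q)⁻¹ + k j - k (j - 1))_{j ∈ S}`, over a uniformly random key
family `k`, is the same for `x` and for `x'`. -/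
theorem proper_subset_view_independent (q n : ℕ) [Fact (Nat.Prime q)]
    [NeZero n] (hn : (n : ZMod q) ≠ 0)
    (S : Finset (ZMod n)) (hS : S ≠ Finset.univ) (x x' : ZMod q) :
    PMF.map (fun (k : ZMod n → ZMod q) (j : S) =>
        x * (n : ZMod q)⁻¹ + k j.val - k (j.val - 1))
      (PMF.uniformOfFintype (ZMod n → ZMod q))
    = PMF.map (fun (k : ZMod n → ZMod q) (j : S) =>
        x' * (n : ZMod q)⁻¹ + k j.val - k (j.val - 1))
      (PMF.uniformOfFintype (ZMod n → ZMod q)) :=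
  (proper_subset_view_independent_general hS fun _ => x * (n : ZMod q)⁻¹).trans
    (proper_subset_view_independent_general hS fun _ => x' * (n : ZMod q)⁻¹).symm
end

section
/- The masked vector's distribution depends only on the aggregate (hybrid Hyb₄ claim): let q be a positive integer, m ≥ 1, and let x, y : Fin m → ZMod q satisfy ∑_{i} x i = ∑_{i} y i. Let μ be the uniform distribution on the subtype {r : Fin m → ZMod q // ∑_{i} r i = 0} of zero-sum mask vectors. Then the pushforward of μ under r ↦ (fun i => x i + r.val i) equals the pushforward of μ under r ↦ (fun i => y i + r.val i). -/
instance zeroSumVectors_nonempty (q m : ℕ) [NeZero q] :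
    Nonempty {r : Fin m → ZMod q // ∑ i, r i = 0} :=
  ⟨⟨0, by simp⟩⟩

theorem map_equiv_uniformOfFintype {α β : Type*} [Fintype α] [Nonempty α] [Fintype β] [Nonempty β]
    (e : α ≃ β) :
    (PMF.uniformOfFintype α).map e = PMF.uniformOfFintype β := by
  ext b
  rw [PMF.map_apply, tsum_eq_single (e.symm b)]
  · simp only [e.apply_symm_apply, if_true, PMF.uniformOfFintype_apply, Fintype.card_congr e]
  · intro a ha
    exact if_neg fun hb => ha (e.eq_symm_apply.mpr hb.symm)

theorem map_add_left_uniformOfFintype_eq {G : Type*} [AddGroup G] (H : AddSubgroup G) [Fintype H]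
    {x y : G} (hxy : -y + x ∈ H) :
    (PMF.uniformOfFintype H).map (fun r => x + r.val) =
      (PMF.uniformOfFintype H).map (fun r => y + r.val) := by
  let d : H := ⟨-y + x, hxy⟩
  have translate : (fun r : H => x + r.val) = (fun r : H => y + r.val) ∘ Equiv.addLeft d := by
    funext r
    simp only [d, Function.comp_apply, Equiv.coe_addLeft, AddSubgroup.coe_add, add_assoc,
      add_neg_cancel_left]
  rw [translate, ← PMF.map_comp, map_equiv_uniformOfFintype]

/-- The group of zero-sum mask vectors. It is given by its carrier, rather than as the kernel of
the summation homomorphism, so that its coercion to a type unfolds to the subtype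
`{r : ι → A // ∑ i, r i = 0}`. -/
def zeroSumSubgroup (ι A : Type*) [Fintype ι] [AddCommGroup A] : AddSubgroup (ι → A) where
  carrier := {r | ∑ i, r i = 0}
  zero_mem' := Finset.sum_const_zero
  add_mem' {r s} (hr : ∑ i, r i = 0) (hs : ∑ i, s i = 0) :=
    show ∑ i, (r i + s i) = 0 by rw [Finset.sum_add_distrib, hr, hs, add_zero]
  neg_mem' {r} (hr : ∑ i, r i = 0) :=
    show ∑ i, -r i = 0 by rw [Finset.sum_neg_distrib, hr, neg_zero]

section ZeroSum

variable {ι A : Type*} [Fintype ι] [AddCommGroup A]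

instance zeroSumSubgroup.decidableMem [DecidableEq A] : DecidablePred (· ∈ zeroSumSubgroup ι A) :=
  fun r => decEq (∑ i, r i) 0

theorem neg_add_mem_zeroSumSubgroup_iff {x y : ι → A} :
    -y + x ∈ zeroSumSubgroup ι A ↔ ∑ i, x i = ∑ i, y i := by
  change ∑ i, (-y i + x i) = 0 ↔ _
  rw [Finset.sum_add_distrib, Finset.sum_neg_distrib, neg_add_eq_zero, eq_comm]

theorem masked_view_depends_only_on_sum_general [Fintype (zeroSumSubgroup ι A)]
    (x y : ι → A) (h : ∑ i, x i = ∑ i, y i) :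
    (PMF.uniformOfFintype (zeroSumSubgroup ι A)).map (fun r i => x i + r.val i) =
      (PMF.uniformOfFintype (zeroSumSubgroup ι A)).map (fun r i => y i + r.val i) :=
  map_add_left_uniformOfFintype_eq _ (neg_add_mem_zeroSumSubgroup_iff.mpr h)

end ZeroSum

/-- The masked vector's distribution depends only on the aggregate: if
`∑ i, x i = ∑ i, y i`, then masking `x` and masking `y` with a uniformly
random zero-sum mask vector `r` yields identically distributed views. -/
theorem masked_view_depends_only_on_sum (q m : ℕ) [NeZero q] [NeZero m]
    (x y : Fin m → ZMod q) (h : ∑ i, x i = ∑ i, y i) :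
    PMF.map (fun (r : {r : Fin m → ZMod q // ∑ i, r i = 0}) (i : Fin m) =>
        x i + r.val i)
      (PMF.uniformOfFintype {r : Fin m → ZMod q // ∑ i, r i = 0})
    = PMF.map (fun (r : {r : Fin m → ZMod q // ∑ i, r i = 0}) (i : Fin m) =>
        y i + r.val i)
      (PMF.uniformOfFintype {r : Fin m → ZMod q // ∑ i, r i = 0}) :=
  masked_view_depends_only_on_sum_general x y h
end
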